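/- arXiv:1805.06778 — 2 statements merged into one kernel-verified Lean document; each statement's English description precedes it below -/
import Mathlib

section
/- Let X be a real Banach space with a Schauder basis (e_n). Then (e_n) is almost greedy if and only if there exists a constant C such that for every x ∈ X, every m ∈ ℕ, every greedy ordering for x, every a ∈ ℝ, and every finite set A ⊂ ℕ with |A| ≤ m and either max A < α_m(x) or min A > β_m(x), one has ‖x − G_m(x)‖ ≤ C‖x − a·1_A‖. -/
open Filter Topology

/-- A Schauder basis of a real normed space `X`, given by basis vectors `e n` together with
biorthogonal (coordinate) functionals `f n`, such that every `x` is the limit of its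
partial-sum expansion `∑_{n < N} f n x • e n`. -/
structure SchauderBasisSys (X : Type*) [NormedAddCommGroup X] [NormedSpace ℝ X] where
  e : ℕ → X
  f : ℕ → X →L[ℝ] ℝ
  biorth : ∀ m n : ℕ, f m (e n) = if m = n then (1 : ℝ) else 0
  expansion : ∀ x : X,
    Filter.Tendsto (fun N : ℕ => ∑ n ∈ Finset.range N, f n x • e n) Filter.atTop (nhds x)

namespace SchauderBasisSys

variable {X : Type*} [NormedAddCommGroup X] [NormedSpace ℝ X]

/-- The coordinate projection onto a finite set `A` of indices: `P_A x = ∑_{i ∈ A} e_i^*(x) e_i`. -/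
noncomputable def P (S : SchauderBasisSys X) (A : Finset ℕ) (x : X) : X :=
  ∑ i ∈ A, S.f i x • S.e i

/-- The indicator vector `1_A = ∑_{i ∈ A} e_i`. -/
noncomputable def ind (S : SchauderBasisSys X) (A : Finset ℕ) : X :=
  ∑ i ∈ A, S.e i

/-- A greedy ordering for `x`: an injection `ρ : ℕ → ℕ` whose range contains the support of `x`
and which rearranges the coordinates of `x` in nonincreasing order of absolute value. -/
def IsGreedyOrdering (S : SchauderBasisSys X) (x : X) (ρ : ℕ → ℕ) : Prop :=
  Function.Injective ρ ∧ (∀ n : ℕ, S.f n x ≠ 0 → n ∈ Set.range ρ) ∧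
    ∀ j k : ℕ, j ≤ k → |S.f (ρ k) x| ≤ |S.f (ρ j) x|

/-- The greedy set `Λ_m(x) = {ρ(0), …, ρ(m-1)}` associated to a greedy ordering `ρ`. -/
def Lam (ρ : ℕ → ℕ) (m : ℕ) : Finset ℕ := (Finset.range m).image ρ

/-- The `m`-th greedy approximation `G_m(x) = ∑_{j < m} e_{ρ(j)}^*(x) e_{ρ(j)}`. -/
noncomputable def G (S : SchauderBasisSys X) (x : X) (ρ : ℕ → ℕ) (m : ℕ) : X :=
  ∑ j ∈ Finset.range m, S.f (ρ j) x • S.e (ρ j)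

/-- Quasi-greedy: `‖G_m(x)‖ ≤ K ‖x‖` uniformly. -/
def QuasiGreedy (S : SchauderBasisSys X) : Prop :=
  ∃ K : ℝ, ∀ (x : X) (ρ : ℕ → ℕ) (m : ℕ),
    S.IsGreedyOrdering x ρ → ‖S.G x ρ m‖ ≤ K * ‖x‖

/-- Conservative: `‖1_A‖ ≤ Γ ‖1_B‖` whenever `|A| ≤ |B|` and `max A < min B`. -/
def Conservative (S : SchauderBasisSys X) : Prop :=
  ∃ Γ : ℝ, ∀ A B : Finset ℕ, A.card ≤ B.card →
    (∀ i ∈ A, ∀ j ∈ B, i < j) → ‖S.ind A‖ ≤ Γ * ‖S.ind B‖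

/-- Reverse conservative: `‖1_A‖ ≤ Γ ‖1_B‖` whenever `|A| ≤ |B|` and `max B < min A`. -/
def ReverseConservative (S : SchauderBasisSys X) : Prop :=
  ∃ Γ : ℝ, ∀ A B : Finset ℕ, A.card ≤ B.card →
    (∀ i ∈ A, ∀ j ∈ B, j < i) → ‖S.ind A‖ ≤ Γ * ‖S.ind B‖

/-- Partially greedy: `‖x - G_m(x)‖ ≤ C ‖∑_{n ≥ m} e_n^*(x) e_n‖ = C ‖x - P_{[0,m)}(x)‖`. -/
def PartiallyGreedy (S : SchauderBasisSys X) : Prop :=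
  ∃ C : ℝ, ∀ (x : X) (ρ : ℕ → ℕ) (m : ℕ), S.IsGreedyOrdering x ρ →
    ‖x - S.G x ρ m‖ ≤ C * ‖x - S.P (Finset.range m) x‖

/-- Almost greedy: `‖x - G_m(x)‖ ≤ C inf{‖x - P_A(x)‖ : |A| ≤ m}`. -/
def AlmostGreedy (S : SchauderBasisSys X) : Prop :=
  ∃ C : ℝ, ∀ (x : X) (ρ : ℕ → ℕ) (m : ℕ) (A : Finset ℕ), S.IsGreedyOrdering x ρ →
    A.card ≤ m → ‖x - S.G x ρ m‖ ≤ C * ‖x - S.P A x‖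

end SchauderBasisSys

open SchauderBasisSys

/-!
Whether `‖x - P_H x‖` is controlled depends only on the greedy set `H`, so orderings can be
dropped. Both conditions then imply their common special case, in which `x` is approximated by
`a • 1_A` with `A` on one side of `H` and `x` equal to `a` on `A`. Conversely, this case bounds
`b • 1_E` by `y`, whenever `|E| ≤ |H|` and `b` is at most the coordinates of `y` on a greedy set
`H`: pass from `E` to a set `F` far to the right of `E ∪ H`, and compare `F` with `H`. By convexity
`y` then dominates every vector supported on `E` whose coordinates are at most `b`. For
`y = x - z`, with `z` supported on a set `A` disjoint from `H` and `|A| ≤ |H|`, and `b` the least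
coordinate of `x` on `H`, this bounds both `P_A x` and the small coordinates of `y` on `A`; what
remains of `x - P_H x` is the error of a greedy approximation of `y`. Hence
`‖x - P_H x‖ ≤ K ‖x - z‖`, which contains both conditions.
-/

open scoped Pointwise in
theorem sum_mem_of_mem_segment {ι E : Type*} [DecidableEq ι] [AddCommGroup E] [Module ℝ E]
    {s : Set E} (hs : Convex ℝ s) {I : Finset ι} {u v z : ι → E}
    (hz : ∀ i ∈ I, z i ∈ segment ℝ (u i) (v i))
    (h : ∀ J ⊆ I, ∑ i ∈ J, u i + ∑ i ∈ I \ J, v i ∈ s) : ∑ i ∈ I, z i ∈ s := by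
  classical
  have hz_hull : ∑ i ∈ I, z i ∈ convexHull ℝ (∑ i ∈ I, {u i, v i}) := by
    rw [convexHull_sum]
    exact Set.finsetSum_mem_finsetSum _ _ _ fun i hi => by
      rw [convexHull_pair]
      exact hz i hi
  refine convexHull_min (fun w hw => ?_) hs hz_hull
  obtain ⟨g, hg, rfl⟩ := (Set.mem_finsetSum _ _ _).1 hw
  have hsplit : ∑ i ∈ I, g i =
      ∑ i ∈ I.filter (fun i => g i = u i), u i +
        ∑ i ∈ I \ I.filter (fun i => g i = u i), v i := by
    rw [← Finset.sum_filter_add_sum_filter_not I (fun i => g i = u i), Finset.filter_not]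
    congr 1
    · exact Finset.sum_congr rfl fun i hi => (Finset.mem_filter.1 hi).2
    · refine Finset.sum_congr rfl fun i hi => ?_
      have hgi : g i = u i ∨ g i = v i := hg (Finset.mem_sdiff.1 hi).1
      grind
  rw [hsplit]
  exact h _ (Finset.filter_subset _ I)

theorem norm_sum_smul_le_two_mul {ι E : Type*} [SeminormedAddCommGroup E] [NormedSpace ℝ E]
    {I : Finset ι} {u : ι → E} {c : ι → ℝ} {b M : ℝ} (hc : ∀ i ∈ I, |c i| ≤ b)
    (h : ∀ J ⊆ I, ‖b • ∑ i ∈ J, u i‖ ≤ M) : ‖∑ i ∈ I, c i • u i‖ ≤ 2 * M := by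
  classical
  rw [← mem_closedBall_zero_iff]
  refine sum_mem_of_mem_segment (u := fun i => b • u i) (v := fun i => -b • u i)
    (convex_closedBall 0 (2 * M)) (fun i hi => ?_) fun J hJ => ?_
  · have hseg : c i ∈ segment ℝ b (-b) := by
      rw [segment_symm, segment_eq_Icc (neg_le_self ((abs_nonneg _).trans (hc i hi)))]
      exact abs_le.1 (hc i hi)
    have himage := Set.mem_image_of_mem (LinearMap.toSpanSingleton ℝ E (u i)).toAffineMap hseg
    rw [image_segment] at himage
    exact himage
  · rw [mem_closedBall_zero_iff, ← Finset.smul_sum, ← Finset.smul_sum, neg_smul, ← sub_eq_add_neg,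
      two_mul]
    exact (norm_sub_le _ _).trans (add_le_add (h J hJ) (h _ Finset.sdiff_subset))

theorem exists_perm_antitone_comp {α : Type*} [LinearOrder α] {g : ℕ → α} {N : ℕ}
    (hg : ∀ n k, N ≤ n → g n ≤ g k) : ∃ σ : Equiv.Perm ℕ, Antitone (g ∘ σ) := by
  let τ : Equiv.Perm (Fin N) := Tuple.sort fun i : Fin N => OrderDual.toDual (g i)
  let σ : Equiv.Perm ℕ := τ.extendDomain Fin.equivSubtype
  have hσ : ∀ i (hi : i < N), σ i = τ ⟨i, hi⟩ := fun i hi =>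
    τ.extendDomain_apply_subtype Fin.equivSubtype hi
  refine ⟨σ, fun j k hjk => ?_⟩
  rw [Function.comp_apply, Function.comp_apply]
  rcases lt_or_ge k N with hk | hk
  · have hj : j < N := hjk.trans_lt hk
    rw [hσ k hk, hσ j hj]
    exact Tuple.monotone_sort (fun i : Fin N => OrderDual.toDual (g i))
      (show (⟨j, hj⟩ : Fin N) ≤ ⟨k, hk⟩ from hjk)
  · have hσk : σ k = k := τ.extendDomain_apply_not_subtype Fin.equivSubtype hk.not_gt
    rw [hσk]
    exact hg k _ hk

namespace SchauderBasisSys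

variable {X : Type*} [NormedAddCommGroup X] [NormedSpace ℝ X] (S : SchauderBasisSys X)

/-! ### Coordinates and projections -/

lemma ext_f {x y : X} (h : ∀ n, S.f n x = S.f n y) : x = y :=
  tendsto_nhds_unique (S.expansion x) <| by simpa only [h] using S.expansion y

lemma f_sum_smul (c : ℕ → ℝ) (A : Finset ℕ) (n : ℕ) :
    S.f n (∑ i ∈ A, c i • S.e i) = if n ∈ A then c n else 0 := by
  simp [S.biorth]

lemma f_P (A : Finset ℕ) (x : X) (n : ℕ) :
    S.f n (S.P A x) = if n ∈ A then S.f n x else 0 :=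
  S.f_sum_smul (fun i => S.f i x) A n

lemma f_ind (A : Finset ℕ) (n : ℕ) : S.f n (S.ind A) = if n ∈ A then 1 else 0 := by
  simp [ind, S.biorth]

lemma continuous_P (A : Finset ℕ) : Continuous (S.P A) := by
  unfold P
  fun_prop

lemma tendsto_P_Ico_add (x : X) (m : ℕ) :
    Tendsto (fun K => S.P (Finset.Ico K (K + m)) x) atTop (𝓝 0) := by
  have h := ((tendsto_add_atTop_iff_nat m).2 (S.expansion x)).sub (S.expansion x)
  rw [sub_self] at h
  exact h.congr fun K => (Finset.sum_Ico_eq_sub _ (Nat.le_add_right K m)).symm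

/-! ### Greedy sets -/

/-- `H` is a greedy set of `x`: no coordinate of `x` outside `H` exceeds one inside `H` in absolute
value. These are the sets `Λ_m(x)`, freed from the choice of an ordering. -/
def IsGreedySet (S : SchauderBasisSys X) (x : X) (H : Finset ℕ) : Prop :=
  ∀ h ∈ H, ∀ n ∉ H, |S.f n x| ≤ |S.f h x|

namespace IsGreedySet

variable {S : SchauderBasisSys X} {x y : X} {H : Finset ℕ}

lemma of_threshold {b : ℝ} (hge : ∀ h ∈ H, b ≤ |S.f h x|) (hle : ∀ n ∉ H, |S.f n x| ≤ b) :
    S.IsGreedySet x H :=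
  fun h hh n hn => (hle n hn).trans (hge h hh)

lemma exists_threshold (hx : S.IsGreedySet x H) (hH : H.Nonempty) :
    ∃ b, 0 ≤ b ∧ (∀ h ∈ H, b ≤ |S.f h x|) ∧ ∀ n ∉ H, |S.f n x| ≤ b := by
  obtain ⟨h₀, hh₀, hmin⟩ := H.exists_min_image (fun h => |S.f h x|) hH
  exact ⟨|S.f h₀ x|, abs_nonneg _, hmin, hx h₀ hh₀⟩

lemma mono (hx : S.IsGreedySet x H) (hge : ∀ h ∈ H, |S.f h x| ≤ |S.f h y|)
    (hle : ∀ n ∉ H, |S.f n y| ≤ |S.f n x|) : S.IsGreedySet y H :=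
  fun h hh n hn => (hle n hn).trans ((hx h hh n hn).trans (hge h hh))

lemma sub_P_inter (hx : S.IsGreedySet x H) (A : Finset ℕ) :
    S.IsGreedySet (x - S.P (H ∩ A) x) (H \ A) := by
  intro h hh n hn
  have hxn := hx h (Finset.mem_sdiff.1 hh).1 n
  simp only [map_sub, f_P]
  grind

end IsGreedySet

variable {S}

lemma card_Lam {ρ : ℕ → ℕ} (hρ : Function.Injective ρ) (m : ℕ) : (Lam ρ m).card = m := by
  rw [Lam, Finset.card_image_of_injective _ hρ, Finset.card_range]

namespace IsGreedyOrdering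

variable {x : X} {ρ : ℕ → ℕ}

lemma G_eq_P (hρ : S.IsGreedyOrdering x ρ) (m : ℕ) : S.G x ρ m = S.P (Lam ρ m) x := by
  rw [G, P, Lam, Finset.sum_image hρ.1.injOn]

lemma isGreedySet (hρ : S.IsGreedyOrdering x ρ) (m : ℕ) : S.IsGreedySet x (Lam ρ m) := by
  intro h hh n hn
  obtain ⟨j, hj, rfl⟩ := Finset.mem_image.1 hh
  by_cases hn₀ : S.f n x = 0
  · simp [hn₀]
  obtain ⟨k, rfl⟩ := hρ.2.1 n hn₀
  have hmk : m ≤ k := by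
    by_contra! hkm
    exact hn (Finset.mem_image_of_mem ρ (Finset.mem_range.2 hkm))
  exact hρ.2.2 j k ((Finset.mem_range.1 hj).le.trans hmk)

end IsGreedyOrdering

lemma IsGreedySet.exists_ordering {x : X} {H : Finset ℕ} (hx : S.IsGreedySet x H) {N : ℕ}
    (hHN : ∀ h ∈ H, h < N) (hxN : ∀ n, N ≤ n → S.f n x = 0) :
    ∃ ρ, S.IsGreedyOrdering x ρ ∧ Lam ρ H.card = H := by
  -- Sorting lexicographically by membership in `H` and then by size puts `H` first.
  let key : ℕ → Bool ×ₗ ℝ := fun n => toLex (decide (n ∈ H), |S.f n x|)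
  obtain ⟨σ, hσ⟩ : ∃ σ : Equiv.Perm ℕ, Antitone (key ∘ σ) := by
    refine exists_perm_antitone_comp (N := N) fun n k hn => Prod.Lex.toLex_le_toLex'.2 ⟨?_, ?_⟩
    · simp [show n ∉ H from fun hnH => (hHN n hnH).not_ge hn]
    · simp [hxN n hn]
  have hfirst {j k : ℕ} (hjk : j ≤ k) (hk : σ k ∈ H) : σ j ∈ H := by
    simpa [hk, Bool.le_iff_imp] using (Prod.Lex.toLex_le_toLex'.1 (hσ hjk)).1
  refine ⟨σ, ⟨σ.injective, fun n _ => σ.surjective n, fun j k hjk => ?_⟩, ?_⟩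
  · by_cases h : σ j ∈ H ∧ σ k ∉ H
    · exact hx _ h.1 _ h.2
    · refine (Prod.Lex.toLex_le_toLex'.1 (hσ hjk)).2 ?_
      have := hfirst hjk
      simp only [decide_eq_decide]
      tauto
  · refine Finset.eq_of_subset_of_card_le (fun n hn => ?_) (card_Lam σ.injective _).ge
    obtain ⟨j, hj, rfl⟩ := Finset.mem_image.1 hn
    by_contra hjH
    have hsub : H ⊆ Lam σ j := fun h hh => by
      obtain ⟨k, rfl⟩ := σ.surjective h
      refine Finset.mem_image_of_mem σ (Finset.mem_range.2 ?_)
      by_contra! hjk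
      exact hjH (hfirst hjk hh)
    have hcard := Finset.card_le_card hsub
    rw [card_Lam σ.injective] at hcard
    exact (Finset.mem_range.1 hj).not_ge hcard

/-- A vector need not have a greedy ordering, as its coordinates need not tend to `0`; its finite
truncations do. -/
lemma IsGreedySet.induction_on_ordering {x : X} {H : Finset ℕ} (hx : S.IsGreedySet x H)
    {p : X → Prop} (hp : IsClosed {y | p y})
    (h : ∀ y ρ, S.IsGreedyOrdering y ρ → Lam ρ H.card = H → p y) : p x := by
  refine hp.mem_of_tendsto (S.expansion x) ?_
  have hlarge : ∀ᶠ N in atTop, ∀ i ∈ H, i < N :=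
    (eventually_all_finset H).2 fun i _ => eventually_gt_atTop i
  filter_upwards [hlarge] with N hHN
  have hf : ∀ n, S.f n (S.P (Finset.range N) x) = if n < N then S.f n x else 0 := fun n => by
    simp only [f_P, Finset.mem_range]
  have htrunc : S.IsGreedySet (S.P (Finset.range N) x) H := hx.mono
    (fun i hi => by rw [hf, if_pos (hHN i hi)])
    (fun n _ => by rw [hf]; split_ifs <;> simp)
  obtain ⟨ρ, hρ, hLam⟩ := htrunc.exists_ordering hHN fun n hn => by rw [hf, if_neg hn.not_gt]
  exact h _ ρ hρ hLam

/-! ### Comparison with one-sided approximations -/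

/-- Greedy approximation on `H` is at least as good, up to the factor `C`, as subtracting from `x`
a block `A` on one side of `H` on which all coordinates of `x` are equal. This is the common special
case of the two conditions to be compared. -/
def OneSidedFlatGreedyWith (S : SchauderBasisSys X) (C : ℝ) : Prop :=
  ∀ (x : X) (H A : Finset ℕ) (a : ℝ), S.IsGreedySet x H → A.card ≤ H.card →
    ((∀ i ∈ A, ∀ j ∈ H, i < j) ∨ (∀ i ∈ A, ∀ j ∈ H, j < i)) → (∀ n ∈ A, S.f n x = a) →
    ‖x - S.P H x‖ ≤ C * ‖x - a • S.ind A‖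

/-- Greedy approximation on `H` is at least as good, up to the factor `C`, as any approximation
supported on a set disjoint from `H` and of at most the same size. -/
def DisjointGreedyWith (S : SchauderBasisSys X) (C : ℝ) : Prop :=
  ∀ (x : X) (H A : Finset ℕ) (c : ℕ → ℝ), S.IsGreedySet x H → Disjoint H A → A.card ≤ H.card →
    ‖x - S.P H x‖ ≤ C * ‖x - ∑ i ∈ A, c i • S.e i‖

lemma AlmostGreedy.exists_oneSidedFlatGreedyWith (h : S.AlmostGreedy) :
    ∃ C, S.OneSidedFlatGreedyWith C := by
  obtain ⟨C, hC⟩ := h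
  refine ⟨C, fun x H A a hx hA _ hxA => ?_⟩
  have hP : S.P A x = a • S.ind A := S.ext_f fun n => by
    rw [f_P, map_smul, f_ind, smul_eq_mul]
    grind
  rw [← hP]
  have hPH := S.continuous_P H
  have hPA := S.continuous_P A
  refine hx.induction_on_ordering (p := fun y => ‖y - S.P H y‖ ≤ C * ‖y - S.P A y‖)
    (isClosed_le (by fun_prop) (by fun_prop)) fun y ρ hρ hLam => ?_
  simpa only [hρ.G_eq_P, hLam] using hC y ρ H.card A hρ hA

lemma exists_oneSidedFlatGreedyWith
    (h : ∃ C : ℝ, ∀ (x : X) (ρ : ℕ → ℕ) (m : ℕ) (a : ℝ) (A : Finset ℕ),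
      S.IsGreedyOrdering x ρ → A.card ≤ m →
      ((∀ i ∈ A, ∀ j ∈ Lam ρ m, i < j) ∨ (∀ i ∈ A, ∀ j ∈ Lam ρ m, j < i)) →
      ‖x - S.G x ρ m‖ ≤ C * ‖x - a • S.ind A‖) :
    ∃ C, S.OneSidedFlatGreedyWith C := by
  obtain ⟨C, hC⟩ := h
  refine ⟨C, fun x H A a hx hA hside _ => ?_⟩
  have hP := S.continuous_P H
  refine hx.induction_on_ordering (p := fun y => ‖y - S.P H y‖ ≤ C * ‖y - a • S.ind A‖)
    (isClosed_le (by fun_prop) (by fun_prop)) fun y ρ hρ hLam => ?_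
  simpa only [hρ.G_eq_P, hLam] using hC y ρ H.card a A hρ hA (by rwa [hLam])

namespace OneSidedFlatGreedyWith

variable {C : ℝ} {x y : X} {H : Finset ℕ}

lemma norm_sub_P_le (hC : S.OneSidedFlatGreedyWith C) (hx : S.IsGreedySet x H) :
    ‖x - S.P H x‖ ≤ C * ‖x‖ := by
  simpa using hC x H ∅ 0 hx (by simp) (by simp) (by simp)

lemma one_le (hC : S.OneSidedFlatGreedyWith C) : 1 ≤ C := by
  have he : S.e 0 ≠ 0 := fun h => by simpa [h] using S.biorth 0 0
  have h : ‖S.e 0‖ ≤ C * ‖S.e 0‖ := by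
    simpa [P] using hC.norm_sub_P_le (x := S.e 0) (H := ∅) (by simp [IsGreedySet])
  exact (le_mul_iff_one_le_left (norm_pos_iff.2 he)).1 h

lemma norm_ind_le (hC : S.OneSidedFlatGreedyWith C) {A B : Finset ℕ} (hcard : A.card ≤ B.card)
    (hAB : ∀ i ∈ A, ∀ j ∈ B, i < j) : ‖S.ind A‖ ≤ C * ‖S.ind B‖ := by
  have hf : ∀ n, S.f n (S.ind A + S.ind B) =
      (if n ∈ A then 1 else 0) + if n ∈ B then 1 else 0 := fun n => by
    rw [map_add, f_ind, f_ind]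
  have hgreedy : S.IsGreedySet (S.ind A + S.ind B) B :=
    .of_threshold (b := 1) (fun n hn => by grind) (fun n hn => by grind)
  have h := hC _ B A 1 hgreedy hcard (.inl hAB) fun n hn => by grind
  have hP : S.P B (S.ind A + S.ind B) = S.ind B := S.ext_f fun n => by
    rw [f_P, hf, f_ind]
    grind
  rwa [hP, add_sub_cancel_right, one_smul, add_sub_cancel_left] at h

/-- Apply the hypothesis to `x + b • 1_F`, of which `H` is still a greedy set. -/
lemma norm_smul_ind_le_of_right (hC : S.OneSidedFlatGreedyWith C) (hx : S.IsGreedySet x H) {b : ℝ}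
    (hb : ∀ h ∈ H, |b| ≤ |S.f h x|) {F : Finset ℕ} (hcard : F.card ≤ H.card)
    (hHF : ∀ i ∈ F, ∀ j ∈ H, j < i) (hxF : ∀ n ∈ F, S.f n x = 0) :
    ‖b • S.ind F‖ ≤ 2 * C * ‖x‖ := by
  have hf : ∀ n, S.f n (x + b • S.ind F) = if n ∈ F then b else S.f n x := fun n => by
    rw [map_add, map_smul, f_ind]
    split_ifs with hn
    · simp [hxF n hn]
    · simp
  have hgreedy : S.IsGreedySet (x + b • S.ind F) H := fun h hh n hn => by
    have := hx h hh n hn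
    grind
  have hP : S.P H (x + b • S.ind F) = S.P H x := S.ext_f fun n => by
    rw [f_P, f_P, hf]
    grind
  have hF := hC _ H F b hgreedy hcard (.inr hHF) fun n hn => by rw [hf, if_pos hn]
  rw [hP, add_sub_cancel_right] at hF
  calc ‖b • S.ind F‖ = ‖(x + b • S.ind F - S.P H x) - (x - S.P H x)‖ := by congr 1; abel
    _ ≤ C * ‖x‖ + C * ‖x‖ := (norm_sub_le _ _).trans (add_le_add hF (hC.norm_sub_P_le hx))
    _ = 2 * C * ‖x‖ := by ring

lemma norm_smul_ind_le (hC : S.OneSidedFlatGreedyWith C) (hx : S.IsGreedySet x H) {b : ℝ}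
    (hb : ∀ h ∈ H, |b| ≤ |S.f h x|) {E : Finset ℕ} (hcard : E.card ≤ H.card) :
    ‖b • S.ind E‖ ≤ 2 * C ^ 2 * ‖x‖ := by
  have hC₀ : 0 ≤ C := zero_le_one.trans hC.one_le
  let F : ℕ → Finset ℕ := fun K => Finset.Ico K (K + H.card)
  have hcardF : ∀ K, (F K).card = H.card := fun K => by simp [F]
  have hlim : Tendsto (fun K => 2 * C ^ 2 * ‖x - S.P (F K) x‖) atTop (𝓝 (2 * C ^ 2 * ‖x‖)) := by
    simpa using ((S.tendsto_P_Ico_add x H.card).const_sub x).norm.const_mul (2 * C ^ 2)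
  refine ge_of_tendsto hlim ?_
  have hfar : ∀ᶠ K in atTop, ∀ i ∈ E ∪ H, i < K :=
    (eventually_all_finset _).2 fun i _ => eventually_gt_atTop i
  filter_upwards [hfar] with K hK
  have hlt : ∀ i ∈ E ∪ H, ∀ j ∈ F K, i < j := fun i hi j hj =>
    (hK i hi).trans_le (Finset.mem_Ico.1 hj).1
  have hf : ∀ n, S.f n (x - S.P (F K) x) = if n ∈ F K then 0 else S.f n x := fun n => by
    rw [map_sub, f_P]
    split_ifs <;> simp
  have hfH : ∀ h ∈ H, S.f h (x - S.P (F K) x) = S.f h x := fun h hh => by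
    rw [hf, if_neg fun hF => (hlt h (Finset.mem_union_right E hh) h hF).false]
  have hgreedy : S.IsGreedySet (x - S.P (F K) x) H := hx.mono
    (fun h hh => by rw [hfH h hh]) (fun n _ => by rw [hf]; split_ifs <;> simp)
  have hEF : ‖S.ind E‖ ≤ C * ‖S.ind (F K)‖ := hC.norm_ind_le (hcard.trans (hcardF K).ge)
    fun i hi => hlt i (Finset.mem_union_left H hi)
  have hFx : ‖b • S.ind (F K)‖ ≤ 2 * C * ‖x - S.P (F K) x‖ :=
    hC.norm_smul_ind_le_of_right hgreedy (fun h hh => by rw [hfH h hh]; exact hb h hh)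
      (hcardF K).le (fun i hi j hj => hlt j (Finset.mem_union_right E hj) i hi)
      fun n hn => by rw [hf, if_pos hn]
  rw [norm_smul] at hFx ⊢
  calc ‖b‖ * ‖S.ind E‖ ≤ ‖b‖ * (C * ‖S.ind (F K)‖) := by gcongr
    _ = C * (‖b‖ * ‖S.ind (F K)‖) := by ring
    _ ≤ C * (2 * C * ‖x - S.P (F K) x‖) := by gcongr
    _ = 2 * C ^ 2 * ‖x - S.P (F K) x‖ := by ring

lemma norm_P_le (hC : S.OneSidedFlatGreedyWith C) (hx : S.IsGreedySet x H) {b : ℝ} (hb₀ : 0 ≤ b)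
    (hb : ∀ h ∈ H, b ≤ |S.f h x|) {E : Finset ℕ} (hcard : E.card ≤ H.card)
    (hyE : ∀ n ∈ E, |S.f n y| ≤ b) : ‖S.P E y‖ ≤ 4 * C ^ 2 * ‖x‖ := by
  calc ‖S.P E y‖ ≤ 2 * (2 * C ^ 2 * ‖x‖) := norm_sum_smul_le_two_mul hyE fun J hJ =>
        hC.norm_smul_ind_le hx (by simpa only [abs_of_nonneg hb₀] using hb)
          ((Finset.card_le_card hJ).trans hcard)
    _ = 4 * C ^ 2 * ‖x‖ := by ring

lemma norm_sub_P_le_of_eq_off (hC : S.OneSidedFlatGreedyWith C) (hx : S.IsGreedySet x H)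
    (hH : H.Nonempty) {A : Finset ℕ} (hHA : ∀ h ∈ H, h ∉ A) (hA : A.card ≤ H.card)
    (hxy : ∀ n ∉ A, S.f n y = S.f n x) : ‖x - S.P H x‖ ≤ (C + 8 * C ^ 2) * ‖y‖ := by
  obtain ⟨b, hb₀, hbH, hbn⟩ := hx.exists_threshold hH
  let D := {n ∈ A | b < |S.f n y|}
  let E := {n ∈ A | |S.f n y| ≤ b}
  have hbHD : ∀ h ∈ H ∪ D, b ≤ |S.f h y| := fun h hh => by
    rcases Finset.mem_union.1 hh with hhH | hhD
    · rw [hxy h (hHA h hhH)]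
      exact hbH h hhH
    · exact (Finset.mem_filter.1 hhD).2.le
  have hHD : S.IsGreedySet y (H ∪ D) := .of_threshold hbHD fun n hn => by
    by_cases hnA : n ∈ A
    · grind
    · rw [hxy n hnA]
      exact hbn n fun hnH => hn (Finset.mem_union_left D hnH)
  have hAHD : A.card ≤ (H ∪ D).card := hA.trans (Finset.card_le_card Finset.subset_union_left)
  have hPE : ‖S.P E y‖ ≤ 4 * C ^ 2 * ‖y‖ := hC.norm_P_le hHD hb₀ hbHD
    ((Finset.card_filter_le A _).trans hAHD) fun n hn => (Finset.mem_filter.1 hn).2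
  have hPA : ‖S.P A x‖ ≤ 4 * C ^ 2 * ‖y‖ := hC.norm_P_le hHD hb₀ hbHD hAHD
    fun n hn => hbn n fun hnH => hHA n hnH hn
  have hsplit : x - S.P H x = y - S.P (H ∪ D) y - S.P E y + S.P A x := S.ext_f fun n => by
    simp only [map_sub, map_add, f_P]
    grind
  calc ‖x - S.P H x‖ ≤ ‖y - S.P (H ∪ D) y‖ + ‖S.P E y‖ + ‖S.P A x‖ := by
        rw [hsplit]
        exact (norm_add_le _ _).trans (by gcongr; exact norm_sub_le _ _)
    _ ≤ C * ‖y‖ + 4 * C ^ 2 * ‖y‖ + 4 * C ^ 2 * ‖y‖ := by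
        gcongr
        exact hC.norm_sub_P_le hHD
    _ = (C + 8 * C ^ 2) * ‖y‖ := by ring

theorem disjointGreedyWith (hC : S.OneSidedFlatGreedyWith C) :
    S.DisjointGreedyWith (C + 8 * C ^ 2) := by
  intro x H A c hx hHA hA
  rcases H.eq_empty_or_nonempty with rfl | hH
  · obtain rfl : A = ∅ := by simpa using hA
    rw [Finset.sum_empty, sub_zero]
    exact (hC.norm_sub_P_le hx).trans (by gcongr; exact le_add_of_nonneg_right (by positivity))
  · refine hC.norm_sub_P_le_of_eq_off hx hH (fun _ h => Finset.disjoint_left.1 hHA h) hA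
      fun n hn => ?_
    rw [map_sub, f_sum_smul, if_neg hn, sub_zero]

end OneSidedFlatGreedyWith

namespace DisjointGreedyWith

variable {C : ℝ}

lemma almostGreedy (hC : S.DisjointGreedyWith C) : S.AlmostGreedy := by
  refine ⟨C, fun x ρ m A hρ hA => ?_⟩
  set H := Lam ρ m
  set z := x - S.P (H ∩ A) x with hz
  have hH : z - S.P (H \ A) z = x - S.P H x := S.ext_f fun n => by
    simp only [hz, map_sub, f_P]
    grind
  have hA' : z - S.P (A \ H) z = x - S.P A x := S.ext_f fun n => by
    simp only [hz, map_sub, f_P]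
    grind
  have hcard : (A \ H).card ≤ (H \ A).card :=
    Finset.card_sdiff_le_card_sdiff_iff.2 (hA.trans (card_Lam hρ.1 m).ge)
  rw [hρ.G_eq_P, ← hH, ← hA']
  exact hC z (H \ A) (A \ H) (fun i => S.f i z) ((hρ.isGreedySet m).sub_P_inter A)
    disjoint_sdiff_sdiff hcard

lemma norm_sub_G_le (hC : S.DisjointGreedyWith C) {x : X} {ρ : ℕ → ℕ} {m : ℕ}
    (hρ : S.IsGreedyOrdering x ρ) {A : Finset ℕ} (hcard : A.card ≤ m)
    (hA : Disjoint (Lam ρ m) A) (a : ℝ) : ‖x - S.G x ρ m‖ ≤ C * ‖x - a • S.ind A‖ := by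
  rw [hρ.G_eq_P, ind, Finset.smul_sum]
  exact hC x (Lam ρ m) A (fun _ => a) (hρ.isGreedySet m) hA (hcard.trans (card_Lam hρ.1 m).ge)

end DisjointGreedyWith

end SchauderBasisSys

theorem stmt_9_general {X : Type*} [NormedAddCommGroup X] [NormedSpace ℝ X]
    (S : SchauderBasisSys X) :
    S.AlmostGreedy ↔
      ∃ C : ℝ, ∀ (x : X) (ρ : ℕ → ℕ) (m : ℕ) (a : ℝ) (A : Finset ℕ),
        S.IsGreedyOrdering x ρ → A.card ≤ m →
        ((∀ i ∈ A, ∀ j ∈ Lam ρ m, i < j) ∨ (∀ i ∈ A, ∀ j ∈ Lam ρ m, j < i)) →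
        ‖x - S.G x ρ m‖ ≤ C * ‖x - a • S.ind A‖ := by
  constructor
  · intro h
    obtain ⟨C, hC⟩ := h.exists_oneSidedFlatGreedyWith
    refine ⟨C + 8 * C ^ 2, fun x ρ m a A hρ hcard hside => ?_⟩
    refine hC.disjointGreedyWith.norm_sub_G_le hρ hcard
      (Finset.disjoint_left.2 fun i hi hiA => ?_) a
    rcases hside with hleft | hright
    exacts [(hleft i hiA i hi).false, (hright i hiA i hi).false]
  · intro h
    obtain ⟨C, hC⟩ := exists_oneSidedFlatGreedyWith h
    exact hC.disjointGreedyWith.almostGreedy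

/-- A Schauder basis of a real Banach space is almost greedy if and only
if there is a constant `C` such that `‖x - G_m(x)‖ ≤ C ‖x - a·1_A‖` for every `x`, `m`,
every greedy ordering, every `a ∈ ℝ`, and every finite `A` with `|A| ≤ m` satisfying
either `max A < α_m(x) = min Λ_m(x)` or `min A > β_m(x) = max Λ_m(x)`. -/
theorem stmt_9 {X : Type*} [NormedAddCommGroup X] [NormedSpace ℝ X] [CompleteSpace X]
    (S : SchauderBasisSys X) :
    S.AlmostGreedy ↔
      ∃ C : ℝ, ∀ (x : X) (ρ : ℕ → ℕ) (m : ℕ) (a : ℝ) (A : Finset ℕ),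
        S.IsGreedyOrdering x ρ → A.card ≤ m →
        ((∀ i ∈ A, ∀ j ∈ Lam ρ m, i < j) ∨ (∀ i ∈ A, ∀ j ∈ Lam ρ m, j < i)) →
        ‖x - S.G x ρ m‖ ≤ C * ‖x - a • S.ind A‖ :=
  stmt_9_general S
end

section
/- Let ((e_n),(e_n^*)) be an almost greedy bounded Markushevich basis of a real Banach space X, let 0 < τ < 1 and 0 ≤ λ < 1. Then there exists a constant C such that for every x ∈ X, every m ∈ ℕ, every τ-greedy set Λ_m^τ(x) of order m for x (obtained by the weak thresholding greedy algorithm), every finite set A ⊂ ℕ with |A| ≤ m and |A ∩ Λ_m^τ(x)| ≤ λm, and all real scalars (a_i)_{i∈A}, one has ‖x − G_m^τ(x)‖ ≤ C‖x − Σ_{i∈A} a_i e_i‖, where G_m^τ(x) = Σ_{n∈Λ_m^τ(x)} e_n^*(x)e_n. -/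
/-- A bounded Markushevich basis of a real normed space `X`: a biorthogonal system
`((e_n), (f_n))` whose vectors have dense linear span, whose functionals separate points,
and which is bounded: `a < ‖e_n‖, ‖f_n‖ < b` for some constants `0 < a < b`. -/
structure BddMarkushevichBasis (X : Type*) [NormedAddCommGroup X] [NormedSpace ℝ X] where
  e : ℕ → X
  f : ℕ → X →L[ℝ] ℝ
  biorth : ∀ m n : ℕ, f m (e n) = if m = n then (1 : ℝ) else 0
  dense_span : Dense (Submodule.span ℝ (Set.range e) : Set X)
  separating : ∀ x y : X, (∀ n : ℕ, f n x = f n y) → x = y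
  a : ℝ
  b : ℝ
  ha : 0 < a
  e_bounds : ∀ n : ℕ, a < ‖e n‖ ∧ ‖e n‖ < b
  f_bounds : ∀ n : ℕ, a < ‖f n‖ ∧ ‖f n‖ < b

namespace BddMarkushevichBasis

variable {X : Type*} [NormedAddCommGroup X] [NormedSpace ℝ X]

/-- The coordinate projection onto a finite set `A` of indices: `P_A x = ∑_{i ∈ A} e_i^*(x) e_i`. -/
noncomputable def P (M : BddMarkushevichBasis X) (A : Finset ℕ) (x : X) : X :=
  ∑ i ∈ A, M.f i x • M.e i

/-- A greedy ordering for `x`: an injection `ρ : ℕ → ℕ` whose range contains the support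
of `x` and which rearranges the coordinates of `x` in nonincreasing order of absolute
value. -/
def IsGreedyOrdering (M : BddMarkushevichBasis X) (x : X) (ρ : ℕ → ℕ) : Prop :=
  Function.Injective ρ ∧ (∀ n : ℕ, M.f n x ≠ 0 → n ∈ Set.range ρ) ∧
    ∀ j k : ℕ, j ≤ k → |M.f (ρ k) x| ≤ |M.f (ρ j) x|

/-- The greedy set `Λ_m(x) = {ρ(0), …, ρ(m-1)}` associated to a greedy ordering `ρ`. -/
def Lam (ρ : ℕ → ℕ) (m : ℕ) : Finset ℕ := (Finset.range m).image ρ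

/-- The `m`-th greedy approximation `G_m(x) = ∑_{j < m} e_{ρ(j)}^*(x) e_{ρ(j)}`. -/
noncomputable def G (M : BddMarkushevichBasis X) (x : X) (ρ : ℕ → ℕ) (m : ℕ) : X :=
  ∑ j ∈ Finset.range m, M.f (ρ j) x • M.e (ρ j)

/-- Almost greedy: `‖x - G_m(x)‖ ≤ C inf{‖x - P_A(x)‖ : |A| ≤ m}`. -/
def AlmostGreedy (M : BddMarkushevichBasis X) : Prop :=
  ∃ C : ℝ, ∀ (x : X) (ρ : ℕ → ℕ) (m : ℕ) (A : Finset ℕ), M.IsGreedyOrdering x ρ →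
    A.card ≤ m → ‖x - M.G x ρ m‖ ≤ C * ‖x - M.P A x‖

end BddMarkushevichBasis

open BddMarkushevichBasis

/-!
An almost greedy system is quasi-greedy (compare with `A = ∅`) and superdemocratic: a sum with
coefficients at most `α` over `A` is dominated by one with coefficients at least `α` over `B` as
soon as `|A| ≤ |B|`. Since the coordinates of a vector `y` tend to zero, those of size at least `α`
form a greedy set, so `‖y‖` dominates every combination with coefficients `O(α)` whose number of
terms is comparable to the number of those coordinates.

Now let `Λ` be `τ`-greedy for `x`, let `α` be the least size of a coordinate of `x` in `Λ`, and let
`y = x - ∑_{i ∈ A} a_i e_i`. On `Λ \ A`, which contains at least `(1 - λ) m` indices, the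
coordinates of `y` are those of `x`, hence at least `α` in size. Removing from `y` its coordinates
of size at least `2α / τ` costs a constant factor by quasi-greediness, and what remains differs from
`x - P_Λ x` only on `A ∪ Λ`, by coefficients at most `3α / τ`.
-/

theorem norm_sum_le_nat_mul_of_card_le {ι E : Type*} [SeminormedAddCommGroup E] {v : ι → E} {n : ℕ}
    {K : ℝ} (k : ℕ) {A : Finset ι} (hv : ∀ B ⊆ A, B.card ≤ n → ‖∑ i ∈ B, v i‖ ≤ K)
    (hA : A.card ≤ k * n) : ‖∑ i ∈ A, v i‖ ≤ k * K := by
  classical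
  induction k generalizing A with
  | zero =>
    obtain rfl : A = ∅ := by simpa using hA
    simp
  | succ k ih =>
    obtain ⟨B, hBA, hB⟩ := Finset.exists_subset_card_eq (min_le_right n A.card)
    have hrest : (A \ B).card ≤ k * n := by
      rw [Finset.card_sdiff_of_subset hBA, hB]
      rw [add_mul, one_mul] at hA
      omega
    calc ‖∑ i ∈ A, v i‖ = ‖∑ i ∈ A \ B, v i + ∑ i ∈ B, v i‖ := by rw [Finset.sum_sdiff hBA]
      _ ≤ ‖∑ i ∈ A \ B, v i‖ + ‖∑ i ∈ B, v i‖ := norm_add_le _ _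
      _ ≤ k * K + K := add_le_add
          (ih (fun D hD => hv D (hD.trans Finset.sdiff_subset)) hrest)
          (hv B hBA (hB.trans_le (min_le_left _ _)))
      _ = (k + 1 : ℕ) * K := by push_cast; ring

theorem card_union_le_mul_card_sdiff {ι : Type*} [DecidableEq ι] {A Λ : Finset ι} {lam : ℝ} {k : ℕ}
    (hA : A.card ≤ Λ.card) (hAΛ : ((A ∩ Λ).card : ℝ) ≤ lam * Λ.card)
    (hk : 2 ≤ k * (1 - lam)) : (A ∪ Λ).card ≤ k * (Λ \ A).card := by
  have hsplit : ((Λ \ A).card : ℝ) + (A ∩ Λ).card = Λ.card := by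
    rw [Finset.inter_comm]
    exact_mod_cast Finset.card_sdiff_add_card_inter Λ A
  have hunion : (A ∪ Λ).card ≤ 2 * Λ.card := by
    have := Finset.card_union_le A Λ
    omega
  have : ((A ∪ Λ).card : ℝ) ≤ k * (Λ \ A).card := by
    calc ((A ∪ Λ).card : ℝ) ≤ 2 * Λ.card := by exact_mod_cast hunion
      _ ≤ k * (1 - lam) * Λ.card := by gcongr
      _ = k * ((1 - lam) * Λ.card) := by ring
      _ ≤ k * (Λ \ A).card := by gcongr; linarith
  exact_mod_cast this

namespace BddMarkushevichBasis

variable {X : Type*} [NormedAddCommGroup X] [NormedSpace ℝ X] (M : BddMarkushevichBasis X)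

theorem f_sum_smul (n : ℕ) (S : Finset ℕ) (c : ℕ → ℝ) :
    M.f n (∑ i ∈ S, c i • M.e i) = if n ∈ S then c n else 0 := by
  simp [map_sum, M.biorth]

theorem f_sub_P (n : ℕ) (S : Finset ℕ) (x : X) :
    M.f n (x - M.P S x) = if n ∈ S then 0 else M.f n x := by
  rw [P, map_sub, f_sum_smul]
  split_ifs <;> simp

theorem P_add (S : Finset ℕ) (x y : X) : M.P S (x + y) = M.P S x + M.P S y := by
  simp only [P, map_add, add_smul, Finset.sum_add_distrib]

theorem P_sum_smul (S T : Finset ℕ) (c : ℕ → ℝ) :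
    M.P S (∑ i ∈ T, c i • M.e i) = ∑ i ∈ S ∩ T, c i • M.e i := by
  simp only [P, f_sum_smul, ite_smul, zero_smul, Finset.sum_ite_mem]

theorem P_eq_self {S : Finset ℕ} {x : X} (hx : ∀ j ∉ S, M.f j x = 0) : M.P S x = x :=
  M.separating _ _ fun n => by
    rw [P, f_sum_smul]
    split_ifs with hn
    · rfl
    · exact (hx n hn).symm

theorem abs_f_sub_P_le {S : Finset ℕ} {x : X} {β : ℝ} (hβ : 0 ≤ β)
    (hx : ∀ j ∉ S, |M.f j x| ≤ β) (n : ℕ) : |M.f n (x - M.P S x)| ≤ β := by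
  rw [f_sub_P]
  split_ifs with hn
  · rwa [abs_zero]
  · exact hx n hn

theorem b_pos : 0 < M.b :=
  (norm_nonneg _).trans_lt (M.f_bounds 0).2

theorem abs_f_le (n : ℕ) (x : X) : |M.f n x| ≤ M.b * ‖x‖ :=
  (M.f n).le_of_opNorm_le (M.f_bounds n).2.le x

theorem finite_support_of_mem_span {z : X} (hz : z ∈ Submodule.span ℝ (Set.range M.e)) :
    {j | M.f j z ≠ 0}.Finite := by
  obtain ⟨c, rfl⟩ := Finsupp.mem_span_range_iff_exists_finsupp.1 hz
  refine c.support.finite_toSet.subset fun j hj => ?_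
  by_contra hjc
  exact hj ((M.f_sum_smul j c.support c).trans (if_neg hjc))

theorem finite_setOf_le_abs_f (x : X) {α : ℝ} (hα : 0 < α) : {j | α ≤ |M.f j x|}.Finite := by
  obtain ⟨z, hz, hxz⟩ := Metric.mem_closure_iff.1 (M.dense_span x) (α / M.b)
    (div_pos hα M.b_pos)
  refine (M.finite_support_of_mem_span hz).subset fun j (hj : α ≤ _) hjz => hj.not_gt ?_
  calc |M.f j x| = |M.f j (x - z)| := by rw [map_sub, hjz, sub_zero]
    _ ≤ M.b * ‖x - z‖ := M.abs_f_le j _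
    _ < M.b * (α / M.b) := by
      rw [← dist_eq_norm]
      exact mul_lt_mul_of_pos_left hxz M.b_pos
    _ = α := mul_div_cancel₀ _ M.b_pos.ne'

/-- The finite set of indices at which the coordinate of `x` has absolute value at least `α`. -/
noncomputable def largeCoords (x : X) {α : ℝ} (hα : 0 < α) : Finset ℕ :=
  (M.finite_setOf_le_abs_f x hα).toFinset

theorem mem_largeCoords {x : X} {α : ℝ} {hα : 0 < α} {j : ℕ} :
    j ∈ M.largeCoords x hα ↔ α ≤ |M.f j x| :=
  Set.Finite.mem_toFinset _

theorem exists_sub_P_eq_sub_P_largeCoords_add {x y : X} {A Λ : Finset ℕ} {β : ℝ} (hβ : 0 < β)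
    (hyx : ∀ j ∉ A, M.f j y = M.f j x) (hx : ∀ j ∉ Λ, |M.f j x| ≤ β) :
    ∃ c : ℕ → ℝ, (∀ j, |c j| ≤ 3 * β) ∧
      x - M.P Λ x =
        y - M.P (M.largeCoords y (mul_pos two_pos hβ)) y + ∑ j ∈ A ∪ Λ, c j • M.e j := by
  set Γ := M.largeCoords y (mul_pos two_pos hβ)
  have hy : ∀ j ∉ Γ, |M.f j y| ≤ 2 * β := fun j hj =>
    (not_le.1 (mt M.mem_largeCoords.2 hj)).le
  set z := (x - M.P Λ x) - (y - M.P Γ y) with hz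
  have hz_supp : ∀ j ∉ A ∪ Λ, M.f j z = 0 := fun j hj => by
    rw [Finset.mem_union, not_or] at hj
    have hjΓ : j ∉ Γ := fun hjΓ => by
      have hle : 2 * β ≤ |M.f j y| := M.mem_largeCoords.1 hjΓ
      rw [hyx j hj.1] at hle
      linarith [hx j hj.2]
    rw [hz, map_sub, f_sub_P, f_sub_P, if_neg hj.2, if_neg hjΓ, hyx j hj.1, sub_self]
  refine ⟨fun j => M.f j z, fun j => ?_, ?_⟩
  · calc |M.f j z| = |M.f j (x - M.P Λ x) - M.f j (y - M.P Γ y)| := by rw [hz, map_sub]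
      _ ≤ |M.f j (x - M.P Λ x)| + |M.f j (y - M.P Γ y)| := abs_sub _ _
      _ ≤ β + 2 * β := add_le_add
          (M.abs_f_sub_P_le hβ.le hx j) (M.abs_f_sub_P_le (by positivity) hy j)
      _ = 3 * β := by ring
  · calc x - M.P Λ x = y - M.P Γ y + z := (add_sub_cancel _ _).symm
      _ = y - M.P Γ y + M.P (A ∪ Λ) z := by rw [M.P_eq_self hz_supp]

/-- `Λ` is a `τ`-greedy set for `x`, of order `Λ.card`: the coordinates of `x` in `Λ` are at least
`τ` times those outside. Greedy sets are the case `τ = 1`. -/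
def IsGreedySet (τ : ℝ) (x : X) (Λ : Finset ℕ) : Prop :=
  ∀ i ∈ Λ, ∀ j ∉ Λ, τ * |M.f j x| ≤ |M.f i x|

variable {M}

theorem isGreedySet_largeCoords (x : X) {α : ℝ} (hα : 0 < α) :
    M.IsGreedySet 1 x (M.largeCoords x hα) := by
  intro i hi j hj
  rw [mem_largeCoords] at hi hj
  linarith

theorem IsGreedySet.exists_threshold {τ : ℝ} (hτ : 0 < τ) {x : X} {Λ : Finset ℕ}
    (hΛ : M.IsGreedySet τ x Λ) (hx : M.P Λ x ≠ x) :
    ∃ α > 0, (∀ i ∈ Λ, α ≤ |M.f i x|) ∧ ∀ j ∉ Λ, τ * |M.f j x| ≤ α := by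
  rcases Λ.eq_empty_or_nonempty with rfl | hne
  · have hx0 : 0 < ‖x‖ := norm_pos_iff.2 fun h => hx (by simp [P, h])
    exact ⟨τ * (M.b * ‖x‖), mul_pos hτ (mul_pos M.b_pos hx0), by simp,
      fun j _ => mul_le_mul_of_nonneg_left (M.abs_f_le j x) hτ.le⟩
  · obtain ⟨i₀, hi₀, hmin⟩ := Λ.exists_min_image (fun i => |M.f i x|) hne
    refine ⟨|M.f i₀ x|, ?_, hmin, hΛ i₀ hi₀⟩
    refine (abs_nonneg _).lt_of_ne fun h0 => hx (M.P_eq_self fun j hj => ?_)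
    have hj0 : τ * |M.f j x| ≤ 0 := h0 ▸ hΛ i₀ hi₀ j hj
    exact abs_nonpos_iff.1 (nonpos_of_mul_nonpos_right hj0 hτ)

variable (M) in
/-- The system is almost greedy with constant `C`, in terms of greedy sets (rather than the greedy
orderings of `AlmostGreedy`). -/
def AlmostGreedyWith (C : ℝ) : Prop :=
  ∀ (x : X) (Λ A : Finset ℕ), M.IsGreedySet 1 x Λ → A.card ≤ Λ.card →
    ‖x - M.P Λ x‖ ≤ C * ‖x - M.P A x‖

namespace AlmostGreedyWith

variable {C : ℝ} (h : M.AlmostGreedyWith C)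

include h

theorem norm_sub_P_le {x : X} {Λ : Finset ℕ} (hΛ : M.IsGreedySet 1 x Λ) :
    ‖x - M.P Λ x‖ ≤ C * ‖x‖ := by
  simpa [P] using h x Λ ∅ hΛ (by simp)

theorem one_le : 1 ≤ C := by
  have he : 0 < ‖M.e 0‖ := M.ha.trans (M.e_bounds 0).1
  have hle : ‖M.e 0‖ ≤ C * ‖M.e 0‖ := by
    simpa [P] using h.norm_sub_P_le (x := M.e 0) (Λ := ∅) (by simp [IsGreedySet])
  exact (le_mul_iff_one_le_left he).1 hle

theorem nonneg : 0 ≤ C :=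
  zero_le_one.trans h.one_le

theorem norm_P_le {x : X} {Λ : Finset ℕ} (hΛ : M.IsGreedySet 1 x Λ) :
    ‖M.P Λ x‖ ≤ (1 + C) * ‖x‖ := by
  calc ‖M.P Λ x‖ = ‖x - (x - M.P Λ x)‖ := by rw [sub_sub_cancel]
    _ ≤ ‖x‖ + ‖x - M.P Λ x‖ := norm_sub_le _ _
    _ ≤ ‖x‖ + C * ‖x‖ := by gcongr; exact h.norm_sub_P_le hΛ
    _ = (1 + C) * ‖x‖ := by ring

theorem norm_sum_smul_le_of_disjoint {A B : Finset ℕ} (hAB : Disjoint A B)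
    (hcard : A.card ≤ B.card) {α : ℝ} {c d : ℕ → ℝ}
    (hc : ∀ i ∈ A, |c i| ≤ α) (hd : ∀ i ∈ B, α ≤ |d i|) :
    ‖∑ i ∈ A, c i • M.e i‖ ≤ C * ‖∑ i ∈ B, d i • M.e i‖ := by
  set u := ∑ i ∈ A, c i • M.e i
  set v := ∑ i ∈ B, d i • M.e i
  have hPA : M.P A (u + v) = u := by
    rw [P_add, P_sum_smul, P_sum_smul, Finset.inter_self, Finset.disjoint_iff_inter_eq_empty.1 hAB,
      Finset.sum_empty, add_zero]
  have hPB : M.P B (u + v) = v := by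
    rw [P_add, P_sum_smul, P_sum_smul, Finset.inter_self,
      Finset.disjoint_iff_inter_eq_empty.1 hAB.symm, Finset.sum_empty, zero_add]
  have hgreedy : M.IsGreedySet 1 (u + v) B := by
    intro i hi j hj
    have hfi : M.f i (u + v) = d i := by
      rw [map_add, f_sum_smul, f_sum_smul, if_neg (Finset.disjoint_right.1 hAB hi), if_pos hi,
        zero_add]
    have hfj : M.f j (u + v) = if j ∈ A then c j else 0 := by
      rw [map_add, f_sum_smul, f_sum_smul, if_neg hj, add_zero]
    rw [one_mul, hfi, hfj]
    split_ifs with hjA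
    · exact (hc j hjA).trans (hd i hi)
    · simp
  simpa [hPA, hPB] using h (u + v) B A hgreedy hcard

theorem norm_sum_smul_le {A B : Finset ℕ} (hcard : A.card ≤ B.card) {α : ℝ} (hα : 0 ≤ α)
    {c d : ℕ → ℝ} (hc : ∀ i ∈ A, |c i| ≤ α) (hd : ∀ i ∈ B, α ≤ |d i|) :
    ‖∑ i ∈ A, c i • M.e i‖ ≤ C ^ 2 * ‖∑ i ∈ B, d i • M.e i‖ := by
  have hC := h.nonneg
  obtain ⟨D, hD, hDcard⟩ :=
    (Set.Finite.infinite_compl (A ∪ B).finite_toSet).exists_subset_card_eq B.card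
  have hdisj : Disjoint (A ∪ B) D := Finset.disjoint_right.2 fun i hi => hD hi
  rw [Finset.disjoint_union_left] at hdisj
  calc ‖∑ i ∈ A, c i • M.e i‖ ≤ C * ‖∑ i ∈ D, α • M.e i‖ :=
        h.norm_sum_smul_le_of_disjoint hdisj.1 (hcard.trans hDcard.ge) hc
          fun _ _ => le_abs_self α
    _ ≤ C * (C * ‖∑ i ∈ B, d i • M.e i‖) := by
        gcongr
        exact h.norm_sum_smul_le_of_disjoint hdisj.2.symm hDcard.le
          (fun _ _ => (abs_of_nonneg hα).le) hd
    _ = C ^ 2 * ‖∑ i ∈ B, d i • M.e i‖ := by ring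

theorem norm_sum_smul_le_norm {y : X} {α : ℝ} (hα : 0 < α) {A D : Finset ℕ}
    (hD : ∀ j ∈ D, α ≤ |M.f j y|) (hcard : A.card ≤ D.card) {c : ℕ → ℝ}
    (hc : ∀ i ∈ A, |c i| ≤ α) :
    ‖∑ i ∈ A, c i • M.e i‖ ≤ C ^ 2 * (1 + C) * ‖y‖ := by
  have hDy : D ⊆ M.largeCoords y hα := fun j hj => M.mem_largeCoords.2 (hD j hj)
  calc ‖∑ i ∈ A, c i • M.e i‖ ≤ C ^ 2 * ‖M.P (M.largeCoords y hα) y‖ :=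
        h.norm_sum_smul_le (hcard.trans (Finset.card_le_card hDy)) hα.le hc
          fun i hi => M.mem_largeCoords.1 hi
    _ ≤ C ^ 2 * ((1 + C) * ‖y‖) := by
        gcongr
        exact h.norm_P_le (isGreedySet_largeCoords y hα)
    _ = C ^ 2 * (1 + C) * ‖y‖ := by ring

theorem norm_sum_smul_le_mul_norm {y : X} {α t : ℝ} (hα : 0 < α) (ht : 0 < t) {A D : Finset ℕ}
    (hD : ∀ j ∈ D, α ≤ |M.f j y|) {k : ℕ} (hcard : A.card ≤ k * D.card) {c : ℕ → ℝ}
    (hc : ∀ i ∈ A, |c i| ≤ t * α) :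
    ‖∑ i ∈ A, c i • M.e i‖ ≤ k * (C ^ 2 * (1 + C) * (t * ‖y‖)) := by
  have hDt : ∀ j ∈ D, t * α ≤ |M.f j (t • y)| := fun j hj => by
    rw [map_smul, smul_eq_mul, abs_mul, abs_of_pos ht]
    exact mul_le_mul_of_nonneg_left (hD j hj) ht.le
  rw [← norm_smul_of_nonneg ht.le]
  exact norm_sum_le_nat_mul_of_card_le k (fun B hBA hB => h.norm_sum_smul_le_norm
    (mul_pos ht hα) hDt hB fun i hi => hc i (hBA hi)) hcard

theorem norm_sub_P_le_of_isGreedySet {τ : ℝ} (hτ : 0 < τ) {x : X} {A Λ : Finset ℕ}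
    (hΛ : M.IsGreedySet τ x Λ) {k : ℕ} (hk : (A ∪ Λ).card ≤ k * (Λ \ A).card) (a : ℕ → ℝ) :
    ‖x - M.P Λ x‖ ≤
      (C + k * (C ^ 2 * (1 + C) * (3 / τ))) * ‖x - ∑ i ∈ A, a i • M.e i‖ := by
  by_cases hx : M.P Λ x = x
  · have hC := h.nonneg
    rw [hx, sub_self, norm_zero]
    positivity
  obtain ⟨α, hα, hlarge, hsmall⟩ := hΛ.exists_threshold hτ hx
  set y := x - ∑ i ∈ A, a i • M.e i with hy
  have hyx : ∀ j ∉ A, M.f j y = M.f j x := fun j hj => by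
    rw [hy, map_sub, f_sum_smul, if_neg hj, sub_zero]
  have hlarge_y : ∀ j ∈ Λ \ A, α ≤ |M.f j y| := fun j hj => by
    rw [Finset.mem_sdiff] at hj
    rw [hyx j hj.2]
    exact hlarge j hj.1
  have hβ : 0 < α / τ := div_pos hα hτ
  obtain ⟨c, hc, hdecomp⟩ := M.exists_sub_P_eq_sub_P_largeCoords_add hβ hyx
    fun j hj => (le_div_iff₀' hτ).2 (hsmall j hj)
  have hc' : ∀ j ∈ A ∪ Λ, |c j| ≤ 3 / τ * α := fun j _ => (hc j).trans_eq (by ring)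
  rw [hdecomp]
  refine (norm_add_le _ _).trans ((add_le_add
    (h.norm_sub_P_le (isGreedySet_largeCoords y (mul_pos two_pos hβ)))
    (h.norm_sum_smul_le_mul_norm hα (by positivity) hlarge_y hk hc')).trans_eq ?_)
  ring

end AlmostGreedyWith

end BddMarkushevichBasis

theorem stmt_15_general {X : Type*} [NormedAddCommGroup X] [NormedSpace ℝ X]
    (M : BddMarkushevichBasis X) {τ lam : ℝ} (hτ : 0 < τ) (hlam : lam < 1)
    (hAG : ∃ C₀ : ℝ, ∀ (x : X) (m : ℕ) (Λ : Finset ℕ), Λ.card = m →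
      (∀ i ∈ Λ, ∀ j ∉ Λ, |M.f j x| ≤ |M.f i x|) →
      ∀ A : Finset ℕ, A.card ≤ m →
        ‖x - ∑ i ∈ Λ, M.f i x • M.e i‖ ≤ C₀ * ‖x - M.P A x‖) :
    ∃ C : ℝ, ∀ (x : X) (m : ℕ) (Λ : Finset ℕ), Λ.card = m →
      (∀ i ∈ Λ, ∀ j ∉ Λ, τ * |M.f j x| ≤ |M.f i x|) →
      ∀ (A : Finset ℕ) (a : ℕ → ℝ), A.card ≤ m → ((A ∩ Λ).card : ℝ) ≤ lam * m →
        ‖x - ∑ i ∈ Λ, M.f i x • M.e i‖ ≤ C * ‖x - ∑ i ∈ A, a i • M.e i‖ := by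
  obtain ⟨C₀, hC₀⟩ := hAG
  have h : M.AlmostGreedyWith C₀ := fun x Λ A hΛ hA =>
    hC₀ x Λ.card Λ rfl (by simpa only [IsGreedySet, one_mul] using hΛ) A hA
  obtain ⟨k, hk⟩ := exists_nat_ge (2 / (1 - lam))
  rw [div_le_iff₀ (sub_pos.2 hlam)] at hk
  refine ⟨C₀ + k * (C₀ ^ 2 * (1 + C₀) * (3 / τ)), ?_⟩
  rintro x _ Λ rfl hΛ A a hA hAΛ
  exact h.norm_sub_P_le_of_isGreedySet hτ hΛ (card_union_le_mul_card_sdiff hA hAΛ hk) a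

/-- Let `((e_n),(e_n^*))` be an almost greedy bounded Markushevich
basis of a real Banach space (almost greedy: `‖x - G_m(x)‖ ≤ C₀ inf{‖x - P_A x‖ : |A| ≤ m}`
for every greedy set `Λ` of order `m`, i.e. every `Λ` with `|Λ| = m` and
`min_{i∈Λ}|e_i^*(x)| ≥ sup_{j∉Λ}|e_j^*(x)|`). Let `0 < τ < 1` and `0 ≤ λ < 1`. Then there
is a constant `C` such that for every `x`, every `m`, every `τ`-greedy set `Λ` of order
`m` for `x` (i.e. `|Λ| = m` and `min_{i∈Λ}|e_i^*(x)| ≥ τ · sup_{j∉Λ}|e_j^*(x)|`, exactly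
the sets produced by the weak thresholding greedy algorithm), every finite `A` with
`|A| ≤ m` and `|A ∩ Λ| ≤ λ m`, and all scalars `(a_i)`:
`‖x - G_m^τ(x)‖ ≤ C ‖x - ∑_{i ∈ A} a_i e_i‖`, where `G_m^τ(x) = ∑_{i ∈ Λ} e_i^*(x) e_i`. -/
theorem stmt_15 {X : Type*} [NormedAddCommGroup X] [NormedSpace ℝ X] [CompleteSpace X]
    (M : BddMarkushevichBasis X) (τ lam : ℝ)
    (hτ0 : 0 < τ) (hτ1 : τ < 1) (hlam0 : 0 ≤ lam) (hlam1 : lam < 1)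
    (hAG : ∃ C₀ : ℝ, ∀ (x : X) (m : ℕ) (Λ : Finset ℕ), Λ.card = m →
      (∀ i ∈ Λ, ∀ j ∉ Λ, |M.f j x| ≤ |M.f i x|) →
      ∀ A : Finset ℕ, A.card ≤ m →
        ‖x - ∑ i ∈ Λ, M.f i x • M.e i‖ ≤ C₀ * ‖x - M.P A x‖) :
    ∃ C : ℝ, ∀ (x : X) (m : ℕ) (Λ : Finset ℕ), Λ.card = m →
      (∀ i ∈ Λ, ∀ j ∉ Λ, τ * |M.f j x| ≤ |M.f i x|) →
      ∀ (A : Finset ℕ) (a : ℕ → ℝ), A.card ≤ m → ((A ∩ Λ).card : ℝ) ≤ lam * m →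
        ‖x - ∑ i ∈ Λ, M.f i x • M.e i‖ ≤ C * ‖x - ∑ i ∈ A, a i • M.e i‖ :=
  stmt_15_general M hτ0 hlam1 hAG
end
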